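/- Let p ∈ ℝ^m with p_i > 0 for all i, B > 0, λ > 0, and d ∈ ℝ^m, and let K := {x ∈ ℝ^m : pᵀx ≤ B, 0 ≤ x ≤ 1}. Then a point x ∈ K maximizes dᵀx − (λ/2)‖x‖₂² over K if and only if there exists τ ≥ 0 such that τ·(B − pᵀx) = 0 and λ·x_i = max{0, min{λ, d_i − p_i·τ}} for every i ∈ {1,…,m}. -/

import Mathlib

open Matrix

/-!
For a multiplier `τ ≥ 0` of the budget constraint, the Lagrangian `dᵀx − (λ/2)‖x‖² − τ pᵀx`
separates over coordinates, and its maximizer over the unit cube is obtained by clamping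
`d i − p i τ` to `[0, λ]` and dividing by `λ`. Strong concavity gives quadratic growth away from
this point; when it is feasible and complementary to `τ`, the growth bound passes to the knapsack
objective, so the point is the unique maximizer over the polytope. It remains to find one such `τ`.
The resource usage of the clamped point is continuous in `τ`, and for large `τ` it is minimal over
the cube, hence within budget as soon as the polytope is nonempty. Either `τ = 0` already respects
the budget, or the intermediate value theorem gives a `τ` that exhausts it.
-/

lemma sub_clamp_mul_sub_clamp_nonpos {R : Type*} [Ring R] [LinearOrder R] [IsOrderedRing R]
    {a b w : R} (hw : w ∈ Set.Icc a b) (c : R) :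
    (c - max a (min b c)) * (w - max a (min b c)) ≤ 0 := by
  obtain ⟨haw, hwb⟩ := hw
  rcases le_total c a with hca | hac
  · rw [max_eq_left ((min_le_right b c).trans hca)]
    exact mul_nonpos_of_nonpos_of_nonneg (sub_nonpos.2 hca) (sub_nonneg.2 haw)
  rcases le_total b c with hbc | hcb
  · rw [min_eq_left hbc, max_eq_right (haw.trans hwb)]
    exact mul_nonpos_of_nonneg_of_nonpos (sub_nonneg.2 hbc) (sub_nonpos.2 hwb)
  · rw [min_eq_right hcb, max_eq_right hac, sub_self, zero_mul]

lemma eventually_mul_clamp_sub_mul_le {𝕜 : Type*} [Field 𝕜] [LinearOrder 𝕜]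
    [IsStrictOrderedRing 𝕜] {a b w : 𝕜} (hw : w ∈ Set.Icc a b) (c q : 𝕜) :
    ∀ᶠ t in Filter.atTop, q * max a (min b (c - t * q)) ≤ q * w := by
  obtain ⟨haw, hwb⟩ := hw
  rcases lt_trichotomy q 0 with hq | rfl | hq
  · filter_upwards [Filter.eventually_ge_atTop ((c - b) / q)] with t ht
    have hbt : b ≤ c - t * q := by linarith [(div_le_iff_of_neg hq).1 ht]
    rw [min_eq_left hbt, max_eq_right (haw.trans hwb)]
    exact mul_le_mul_of_nonpos_left hwb hq.le
  · simp only [zero_mul, le_refl, Filter.eventually_true]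
  · filter_upwards [Filter.eventually_ge_atTop ((c - a) / q)] with t ht
    have hta : c - t * q ≤ a := by linarith [(div_le_iff₀ hq).1 ht]
    rw [max_eq_left ((min_le_right _ _).trans hta)]
    exact mul_le_mul_of_nonneg_left haw hq.le

lemma exists_nonneg_mul_sub_eq_zero {g : ℝ → ℝ} (hg : Continuous g) {B T : ℝ} (hT : 0 ≤ T)
    (hgT : g T ≤ B) : ∃ τ, 0 ≤ τ ∧ g τ ≤ B ∧ τ * (B - g τ) = 0 := by
  rcases le_or_gt (g 0) B with h0 | h0
  · exact ⟨0, le_rfl, h0, zero_mul _⟩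
  · obtain ⟨τ, hτ, hgτ⟩ := intermediate_value_Icc' hT hg.continuousOn ⟨hgT, h0.le⟩
    exact ⟨τ, hτ.1, hgτ.le, by rw [hgτ, sub_self, mul_zero]⟩

section Knapsack

variable {ι : Type*}

/-- The maximizer of the separable function `cᵀx − (lam/2)‖x‖²` over the unit cube, for
`0 < lam`. -/
noncomputable def cubeMaximizer (lam : ℝ) (c : ι → ℝ) : ι → ℝ :=
  fun i => max 0 (min lam (c i)) / lam

lemma eq_cubeMaximizer_iff {lam : ℝ} (hlam : lam ≠ 0) {c x : ι → ℝ} :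
    x = cubeMaximizer lam c ↔ ∀ i, lam * x i = max 0 (min lam (c i)) := by
  simp only [funext_iff, cubeMaximizer, eq_div_iff hlam, mul_comm lam]

lemma cubeMaximizer_mem_Icc {lam : ℝ} (hlam : 0 < lam) (c : ι → ℝ) (i : ι) :
    cubeMaximizer lam c i ∈ Set.Icc 0 1 :=
  ⟨div_nonneg (le_max_left _ _) hlam.le,
    (div_le_one hlam).2 (max_le hlam.le (min_le_left _ _))⟩

@[fun_prop]
lemma continuous_cubeMaximizer (lam : ℝ) :
    Continuous (cubeMaximizer lam : (ι → ℝ) → ι → ℝ) := by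
  unfold cubeMaximizer
  fun_prop

variable [Fintype ι]

/-- The fractional knapsack objective with gain vector `d` and a quadratic penalty of weight `lam`.
The Euclidean norm is written as a sum of squares, since `ι → ℝ` carries the sup norm. -/
noncomputable def regularizedValue (lam : ℝ) (d x : ι → ℝ) : ℝ :=
  d ⬝ᵥ x - lam / 2 * ∑ i, x i ^ 2

/-- The feasible region of the fractional knapsack problem with cost vector `p` and budget `B`. -/
def knapsackPolytope (p : ι → ℝ) (B : ℝ) : Set (ι → ℝ) :=
  {x | p ⬝ᵥ x ≤ B ∧ ∀ i, x i ∈ Set.Icc 0 1}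

lemma regularizedValue_sub_smul (lam τ : ℝ) (d p x : ι → ℝ) :
    regularizedValue lam (d - τ • p) x = regularizedValue lam d x - τ * p ⬝ᵥ x := by
  simp only [regularizedValue, sub_dotProduct, smul_dotProduct, smul_eq_mul]
  ring

lemma regularizedValue_add_sum_sq_le_cubeMaximizer {lam : ℝ} (hlam : 0 < lam) (c : ι → ℝ)
    {y : ι → ℝ} (hy : ∀ i, y i ∈ Set.Icc 0 1) :
    regularizedValue lam c y + lam / 2 * ∑ i, (y i - cubeMaximizer lam c i) ^ 2 ≤
      regularizedValue lam c (cubeMaximizer lam c) := by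
  set x := cubeMaximizer lam c with hx
  have first_order (i : ι) : (c i - lam * x i) * (y i - x i) ≤ 0 := by
    have hmem : lam * y i ∈ Set.Icc 0 lam :=
      ⟨mul_nonneg hlam.le (hy i).1, mul_le_of_le_one_right hlam.le (hy i).2⟩
    have hclamp := sub_clamp_mul_sub_clamp_nonpos hmem (c i)
    rw [← (eq_cubeMaximizer_iff hlam.ne').1 hx i, ← mul_sub, mul_left_comm] at hclamp
    exact nonpos_of_mul_nonpos_right hclamp hlam
  have coordinate (i : ι) :
      c i * y i - lam / 2 * y i ^ 2 + lam / 2 * (y i - x i) ^ 2 ≤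
        c i * x i - lam / 2 * x i ^ 2 := by
    linarith [first_order i]
  simpa only [regularizedValue, dotProduct, Finset.sum_add_distrib, Finset.sum_sub_distrib,
    Finset.mul_sum] using Finset.sum_le_sum fun i (_ : i ∈ Finset.univ) => coordinate i

lemma regularizedValue_add_sum_sq_le_of_complementary {lam : ℝ} (hlam : 0 < lam)
    {p d x y : ι → ℝ} {B τ : ℝ} (hτ : 0 ≤ τ) (hcompl : τ * (B - p ⬝ᵥ x) = 0)
    (hx : x = cubeMaximizer lam (d - τ • p)) (hy : y ∈ knapsackPolytope p B) :
    regularizedValue lam d y + lam / 2 * ∑ i, (y i - x i) ^ 2 ≤ regularizedValue lam d x := by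
  have hgrowth := regularizedValue_add_sum_sq_le_cubeMaximizer hlam (d - τ • p) hy.2
  rw [← hx, regularizedValue_sub_smul, regularizedValue_sub_smul] at hgrowth
  have hbudget : τ * p ⬝ᵥ y ≤ τ * B := mul_le_mul_of_nonneg_left hy.1 hτ
  linarith

lemma eventually_dotProduct_cubeMaximizer_le {lam : ℝ} (hlam : 0 < lam) (p d : ι → ℝ)
    {y : ι → ℝ} (hy : ∀ i, y i ∈ Set.Icc 0 1) :
    ∀ᶠ τ : ℝ in Filter.atTop, p ⬝ᵥ cubeMaximizer lam (d - τ • p) ≤ p ⬝ᵥ y := by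
  have hcoord (i : ι) : ∀ᶠ τ : ℝ in Filter.atTop,
      p i * max 0 (min lam (d i - τ * p i)) ≤ p i * (y i * lam) :=
    eventually_mul_clamp_sub_mul_le
      ⟨mul_nonneg (hy i).1 hlam.le, mul_le_of_le_one_left hlam.le (hy i).2⟩ _ _
  filter_upwards [Filter.eventually_all.2 hcoord] with τ hτ
  refine Finset.sum_le_sum fun i _ => ?_
  rw [cubeMaximizer, ← mul_div_assoc, div_le_iff₀ hlam, mul_assoc]
  exact hτ i

lemma exists_complementary_cubeMaximizer {lam : ℝ} (hlam : 0 < lam) (d : ι → ℝ) {p : ι → ℝ}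
    {B : ℝ} (hK : (knapsackPolytope p B).Nonempty) :
    ∃ τ, 0 ≤ τ ∧ cubeMaximizer lam (d - τ • p) ∈ knapsackPolytope p B ∧
      τ * (B - p ⬝ᵥ cubeMaximizer lam (d - τ • p)) = 0 := by
  obtain ⟨y, hyB, hy⟩ := hK
  obtain ⟨T, hTy, hT⟩ := ((eventually_dotProduct_cubeMaximizer_le hlam p d hy).and
    (Filter.eventually_ge_atTop 0)).exists
  have hcont : Continuous fun τ : ℝ => p ⬝ᵥ cubeMaximizer lam (d - τ • p) := by fun_prop
  obtain ⟨τ, hτ, hτB, hcompl⟩ := exists_nonneg_mul_sub_eq_zero hcont hT (hTy.trans hyB)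
  exact ⟨τ, hτ, ⟨hτB, cubeMaximizer_mem_Icc hlam _⟩, hcompl⟩

lemma isMaxOn_regularizedValue_iff_exists_cubeMaximizer {lam : ℝ} (hlam : 0 < lam) (d : ι → ℝ)
    {p : ι → ℝ} {B : ℝ} {x : ι → ℝ} (hx : x ∈ knapsackPolytope p B) :
    IsMaxOn (regularizedValue lam d) (knapsackPolytope p B) x ↔
      ∃ τ, 0 ≤ τ ∧ τ * (B - p ⬝ᵥ x) = 0 ∧ x = cubeMaximizer lam (d - τ • p) := by
  constructor
  · intro hmax
    obtain ⟨τ, hτ, hz, hcompl⟩ := exists_complementary_cubeMaximizer hlam d ⟨x, hx⟩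
    have hgrowth := regularizedValue_add_sum_sq_le_of_complementary hlam hτ hcompl rfl hx
    set z := cubeMaximizer lam (d - τ • p)
    have hzx : regularizedValue lam d z ≤ regularizedValue lam d x := hmax hz
    have hdist : ∑ i, (x i - z i) ^ 2 = 0 :=
      (nonpos_of_mul_nonpos_right (by linarith) (half_pos hlam)).antisymm
        (Finset.sum_nonneg fun i _ => sq_nonneg _)
    have hxz : x = z := by
      funext i
      have hi := (Finset.sum_eq_zero_iff_of_nonneg fun i _ => sq_nonneg _).1 hdist i
        (Finset.mem_univ i)
      exact sub_eq_zero.1 (sq_eq_zero_iff.1 hi)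
    exact ⟨τ, hτ, hxz ▸ hcompl, hxz⟩
  · rintro ⟨τ, hτ, hcompl, hxτ⟩ y hy
    have hdist : 0 ≤ lam / 2 * ∑ i, (y i - x i) ^ 2 := by positivity
    exact (le_add_of_nonneg_right hdist).trans
      (regularizedValue_add_sum_sq_le_of_complementary hlam hτ hcompl hxτ hy)

theorem statement16_general (p : ι → ℝ) (B : ℝ) {lam : ℝ} (hlam : 0 < lam) (d : ι → ℝ)
    {x : ι → ℝ} (hx : x ∈ knapsackPolytope p B) :
    IsMaxOn (regularizedValue lam d) (knapsackPolytope p B) x ↔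
      ∃ τ : ℝ, 0 ≤ τ ∧ τ * (B - p ⬝ᵥ x) = 0 ∧
        ∀ i, lam * x i = max 0 (min lam (d i - p i * τ)) := by
  simp only [isMaxOn_regularizedValue_iff_exists_cubeMaximizer hlam d hx,
    eq_cubeMaximizer_iff hlam.ne', Pi.sub_apply, Pi.smul_apply, smul_eq_mul, mul_comm]

end Knapsack

/-- KKT characterization of the maximizer of the quadratically regularized
fractional knapsack problem: `x ∈ K` maximizes `dᵀx − (λ/2)‖x‖₂²` over
`K = {x : pᵀx ≤ B, 0 ≤ x ≤ 1}` iff there is `τ ≥ 0` with `τ(B − pᵀx) = 0` and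
`λ x_i = max{0, min{λ, d_i − p_i τ}}` for all `i`. -/
theorem statement16 {m : ℕ} (p : Fin m → ℝ) (hp : ∀ i, 0 < p i)
    (B : ℝ) (hB : 0 < B) (lam : ℝ) (hlam : 0 < lam) (d : Fin m → ℝ)
    (x : Fin m → ℝ) (hx : p ⬝ᵥ x ≤ B ∧ ∀ i, 0 ≤ x i ∧ x i ≤ 1) :
    (∀ y : Fin m → ℝ, (p ⬝ᵥ y ≤ B ∧ ∀ i, 0 ≤ y i ∧ y i ≤ 1) →
        d ⬝ᵥ y - lam / 2 * ∑ i, (y i) ^ 2 ≤ d ⬝ᵥ x - lam / 2 * ∑ i, (x i) ^ 2)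
    ↔ ∃ τ : ℝ, 0 ≤ τ ∧ τ * (B - p ⬝ᵥ x) = 0 ∧
        ∀ i, lam * x i = max 0 (min lam (d i - p i * τ)) :=
  statement16_general p B hlam d hx
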